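/- The set function S ↦ log det(I + ρ·H_Sᴴ·H_S), defined on subsets S of the rows of a complex N_T×N_R matrix H (with ρ ≥ 0), is submodular: for all sets S ⊆ T and any row index i ∉ T, f(S ∪ {i}) − f(S) ≥ f(T ∪ {i}) − f(T). -/

import Mathlib

open Matrix

open scoped ComplexOrder

section LoewnerOrder

variable {𝕜 n : Type*} [RCLike 𝕜] [Fintype n] [DecidableEq n]

/-- Inversion is antitone on positive definite matrices, in the Loewner order. -/
theorem Matrix.PosDef.posSemidef_inv_sub_inv {A B : Matrix n n 𝕜} (hA : A.PosDef) (hB : B.PosDef)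
    (hAB : (B - A).PosSemidef) : (A⁻¹ - B⁻¹).PosSemidef := by
  have := hA.inv.isUnit.invertible
  have := hB.isUnit.invertible
  have hAA : A⁻¹⁻¹ = A := nonsing_inv_nonsing_inv A ((isUnit_iff_isUnit_det A).1 hA.isUnit)
  have h := (PosDef.fromBlocks₁₁ 1 B hA.inv).2 (by simpa [hAA] using hAB)
  simpa using (PosDef.fromBlocks₂₂ A⁻¹ 1 hB).1 h

/-- The matrix determinant lemma for a Hermitian rank-one update. -/
theorem Matrix.det_add_smul_vecMulVec_star {A : Matrix n n 𝕜} (hA : IsUnit A.det) (c : 𝕜)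
    (v : n → 𝕜) :
    (A + c • vecMulVec (star v) v).det = A.det * (1 + c * (v ⬝ᵥ A⁻¹ *ᵥ star v)) := by
  have h := det_add_replicateCol_mul_replicateRow (ι := Unit) hA (c • star v) v
  rw [← vecMulVec_eq, smul_vecMulVec] at h
  rw [h, det_unique (n := Unit)]
  simp [Matrix.mul_assoc, Matrix.mul_apply, replicateRow, replicateCol, dotProduct, mulVec,
    Finset.mul_sum, mul_left_comm]

/-- The growth of the determinant under a Hermitian rank-one update is antitone in the base. -/
theorem Matrix.PosDef.det_rankOne_ratio_antitone {A B : Matrix n n ℂ} (hA : A.PosDef)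
    (hB : B.PosDef) (hAB : (B - A).PosSemidef) {c : ℝ} (hc : 0 ≤ c) (v : n → ℂ) :
    Real.log (B + (c : ℂ) • vecMulVec (star v) v).det.re - Real.log B.det.re ≤
      Real.log (A + (c : ℂ) • vecMulVec (star v) v).det.re - Real.log A.det.re := by
  have key : ∀ {M : Matrix n n ℂ}, M.PosDef →
      0 ≤ (v ⬝ᵥ M⁻¹ *ᵥ star v).re ∧
      Real.log (M + (c : ℂ) • vecMulVec (star v) v).det.re - Real.log M.det.re =
        Real.log (1 + c * (v ⬝ᵥ M⁻¹ *ᵥ star v).re) := by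
    intro M hM
    have hq : 0 ≤ (v ⬝ᵥ M⁻¹ *ᵥ star v).re := by
      simpa using hM.inv.posSemidef.re_dotProduct_nonneg (star v)
    obtain ⟨hre, him⟩ := Complex.lt_def.1 hM.det_pos
    simp only [Complex.zero_re, Complex.zero_im] at hre him
    refine ⟨hq, ?_⟩
    rw [det_add_smul_vecMulVec_star ((isUnit_iff_isUnit_det M).1 hM.isUnit), Complex.mul_re,
      ← him, zero_mul, sub_zero, Real.log_mul hre.ne' (by simp; positivity)]
    simp
  obtain ⟨-, hA'⟩ := key hA
  obtain ⟨hq, hB'⟩ := key hB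
  have hle := (hA.posSemidef_inv_sub_inv hB hAB).re_dotProduct_nonneg (star v)
  simp only [star_star, sub_mulVec, dotProduct_sub, map_sub, RCLike.re_eq_complex_re,
    sub_nonneg] at hle
  rw [hA', hB']
  gcongr

end LoewnerOrder

theorem Matrix.conjTranspose_mul_self_submatrix_rows {m n R : Type*} [CommSemiring R] [StarRing R]
    (H : Matrix m n R) (S : Finset m) :
    (H.submatrix (Subtype.val : {i // i ∈ S} → m) id)ᴴ *
      H.submatrix (Subtype.val : {i // i ∈ S} → m) id =
      ∑ i ∈ S, vecMulVec (star (H i)) (H i) := by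
  ext a b
  simp only [mul_apply, sum_apply, conjTranspose_apply, submatrix_apply, vecMulVec_apply,
    Pi.star_apply, id]
  exact Finset.sum_coe_sort S fun i => star (H i a) * H i b

/-- The set function `S ↦ log det (I + ρ·H_Sᴴ·H_S)` on subsets of rows of `H`
is submodular: for `S ⊆ T` and `i ∉ T`,
`f(S ∪ {i}) − f(S) ≥ f(T ∪ {i}) − f(T)`. -/
theorem logdet_capacity_submodular (N r : ℕ)
    (H : Matrix (Fin N) (Fin r) ℂ) (ρ : ℝ) (hρ : 0 ≤ ρ)
    (f : Finset (Fin N) → ℝ)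
    (hf : ∀ S : Finset (Fin N),
      f S = Real.log
        ((1 + (ρ : ℂ) •
            ((H.submatrix (Subtype.val : {i // i ∈ S} → Fin N) id)ᴴ *
              (H.submatrix (Subtype.val : {i // i ∈ S} → Fin N) id))).det.re)) :
    ∀ S T : Finset (Fin N), S ⊆ T → ∀ i : Fin N, i ∉ T →
      f (insert i T) - f T ≤ f (insert i S) - f S := by
  intro S T hST i hi
  have hpsd : ∀ U : Finset (Fin N),
      ((ρ : ℂ) • ∑ j ∈ U, vecMulVec (star (H j)) (H j)).PosSemidef := fun U =>
    (posSemidef_sum U fun j _ => posSemidef_vecMulVec_star_self (H j)).smul (by exact_mod_cast hρ)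
  have hpd : ∀ U : Finset (Fin N),
      (1 + (ρ : ℂ) • ∑ j ∈ U, vecMulVec (star (H j)) (H j)).PosDef := fun U =>
    PosDef.one.add_posSemidef (hpsd U)
  have hinsert : ∀ {U : Finset (Fin N)}, i ∉ U →
      1 + (ρ : ℂ) • ∑ j ∈ insert i U, vecMulVec (star (H j)) (H j) =
        (1 + (ρ : ℂ) • ∑ j ∈ U, vecMulVec (star (H j)) (H j)) +
          (ρ : ℂ) • vecMulVec (star (H i)) (H i) := by
    intro U hU
    rw [Finset.sum_insert hU, smul_add]
    abel
  simp only [hf, conjTranspose_mul_self_submatrix_rows]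
  rw [hinsert hi, hinsert fun h => hi (hST h)]
  refine (hpd S).det_rankOne_ratio_antitone (hpd T) ?_ hρ (H i)
  rw [add_sub_add_left_eq_sub, ← smul_sub, ← Finset.sum_sdiff hST, add_sub_cancel_right]
  exact hpsd (T \ S)
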